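/- Let g ≥ 2 and N ≥ 2 be integers. In ℚ(u,v), with q := uv, J := (1+u)^g(1+v)^g, S := (1+u^2v)^g(1+uv^2)^g, K := (1-u^2)^g(1-v^2)^g and e_n := (1-q^n)/(1-q), set M_odd := ( J·S − q^g·J^2 ) / ((1-q)(1-q^2)) and M := ( 2·J·S − J^2·(1 + 2q^{g+1} − q^2) − K·(1-q)^2 ) / ( 2(1-q)(1-q^2) ). Then M_odd · [ M·e_{2N} + J·(J-1)·e_{g-1}·(e_{2N} − e_N) + J·e_g·(e_N − e_{N-1})·e_N + (1/2)·( J^2·e_N^2 + K·(1-q^{2N})/(1-q^2) ) − (1/2)·J·( e_N^2 + (1-q^{2N})/(1-q^2) ) + J·(1-q^{N-1})(1-q^N)/((1-q^2)(1-q)) ] = J^2·(1-q^N)·(q^g·J − S) / ((1-q)^3(1-q^2)^2) · ( J·(q^{g+1} + q^{N+g-1}) − S·(1 + q^N) ). -/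

import Mathlib

noncomputable section

/-- The field `ℚ(u,v)` of rational functions in two indeterminates over `ℚ`. -/
abbrev Kf : Type := FractionRing (MvPolynomial (Fin 2) ℚ)

/-- The indeterminate `u` in `ℚ(u,v)`. -/
def uu : Kf := algebraMap (MvPolynomial (Fin 2) ℚ) Kf (MvPolynomial.X 0)

/-- The indeterminate `v` in `ℚ(u,v)`. -/
def vv : Kf := algebraMap (MvPolynomial (Fin 2) ℚ) Kf (MvPolynomial.X 1)

/-- `q := uv`. -/
def qq : Kf := uu * vv

/-- `J := (1+u)^g (1+v)^g`. -/
def Jg (g : ℕ) : Kf := (1 + uu) ^ g * (1 + vv) ^ g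

/-- `S := (1+u²v)^g (1+uv²)^g`. -/
def Sg (g : ℕ) : Kf := (1 + uu ^ 2 * vv) ^ g * (1 + uu * vv ^ 2) ^ g

/-- `K := (1-u²)^g (1-v²)^g`. -/
def Kg (g : ℕ) : Kf := (1 - uu ^ 2) ^ g * (1 - vv ^ 2) ^ g

/-- `e_n := (1-qⁿ)/(1-q)`. -/
def ee (n : ℕ) : Kf := (1 - qq ^ n) / (1 - qq)

/-- `M_odd := (JS − q^g J²)/((1-q)(1-q²))`, the Hodge polynomial of the moduli space of rank 2
odd degree stable bundles. -/
def Modd (g : ℕ) : Kf := (Jg g * Sg g - qq ^ g * Jg g ^ 2) / ((1 - qq) * (1 - qq ^ 2))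

/-- `M := (2JS − J²(1+2q^{g+1}−q²) − K(1-q)²)/(2(1-q)(1-q²))`, the Hodge polynomial of
`M^s(2,d)`, `d` even. -/
def Mev (g : ℕ) : Kf :=
  (2 * Jg g * Sg g - Jg g ^ 2 * (1 + 2 * qq ^ (g + 1) - qq ^ 2) - Kg g * (1 - qq) ^ 2) /
    (2 * (1 - qq) * (1 - qq ^ 2))

/-!
Expand the bracket as a polynomial in `J`, `S`, `K`, all taken as free parameters. The `K`-terms
cancel between `M` and the symmetric square. The terms linear in `J` cancel because the class of
`Sym² ℙ^(N-1)` exceeds that of the Grassmannian `Gr(2, N)` by `q^(N-1) e_N`. What is left is `J`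
times a linear form in `S` and `J`, which is the second factor of the closed formula, while
`M_odd` supplies the first one.
-/

section General

variable {F : Type*} [Field F]

/-- The `q`-integer `(1 - qⁿ)/(1 - q)`, the class of `ℙ^(n-1)`; it takes the junk value `0` at
`q = 1`. -/
def qInt (q : F) (n : ℕ) : F := (1 - q ^ n) / (1 - q)

/-- The `q`-analogue `[n][n+1]/[2]` of the triangular number `n(n+1)/2`: the class of the
Grassmannian `Gr(2, n+1)`, and also of `Sym² ℙ^(n-1)`. Being indexed by `n` rather than `n + 1`,
it involves no subtraction in the exponents. -/
def qTriangular (q : F) (n : ℕ) : F :=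
  (1 - q ^ n) * (1 - q ^ (n + 1)) / ((1 - q ^ 2) * (1 - q))

/-- The expression `M_odd`, as a function of independent parameters `q`, `J`, `S`. -/
def hodgeOdd (q J S : F) (g : ℕ) : F := (J * S - q ^ g * J ^ 2) / ((1 - q) * (1 - q ^ 2))

/-- The expression `M`, as a function of independent parameters `q`, `J`, `S`, `K`. -/
def hodgeEven (q J S K : F) (g : ℕ) : F :=
  (2 * J * S - J ^ 2 * (1 + 2 * q ^ (g + 1) - q ^ 2) - K * (1 - q) ^ 2) /
    (2 * (1 - q) * (1 - q ^ 2))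

/-- The bracket, summing the strata of the small-parameter moduli space, as a function of
independent parameters `q`, `J`, `S`, `K`; meaningful for `1 ≤ g` and `1 ≤ N`, where the
subtractions in the exponents do not truncate. -/
def stratificationSum (q J S K : F) (g N : ℕ) : F :=
  hodgeEven q J S K g * qInt q (2 * N) +
    J * (J - 1) * qInt q (g - 1) * (qInt q (2 * N) - qInt q N) +
    J * qInt q g * (qInt q N - qInt q (N - 1)) * qInt q N +
    1 / 2 * (J ^ 2 * qInt q N ^ 2 + K * (1 - q ^ (2 * N)) / (1 - q ^ 2)) -
    1 / 2 * J * (qInt q N ^ 2 + (1 - q ^ (2 * N)) / (1 - q ^ 2)) +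
    J * (1 - q ^ (N - 1)) * (1 - q ^ N) / ((1 - q ^ 2) * (1 - q))

variable {q : F}

theorem one_sub_ne_zero_of_sq_ne_one (hq : q ^ 2 ≠ 1) : 1 - q ≠ 0 :=
  sub_ne_zero.mpr fun h => hq (by rw [← h, one_pow])

theorem one_add_ne_zero_of_sq_ne_one (hq : q ^ 2 ≠ 1) : 1 + q ≠ 0 :=
  fun h => hq (by rw [eq_neg_of_add_eq_zero_right h, neg_one_sq])

theorem one_sub_sq_eq_mul (q : F) : 1 - q ^ 2 = (1 - q) * (1 + q) := by ring

theorem qInt_two_mul (q : F) (n : ℕ) : qInt q (2 * n) = (1 + q ^ n) * qInt q n := by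
  unfold qInt
  ring

theorem qInt_two_mul_sub (q : F) (n : ℕ) : qInt q (2 * n) - qInt q n = q ^ n * qInt q n := by
  rw [qInt_two_mul]
  ring

theorem qInt_succ_sub (hsub : 1 - q ≠ 0) (n : ℕ) : qInt q (n + 1) - qInt q n = q ^ n := by
  unfold qInt
  field_simp
  ring

theorem qInt_succ_sub_mul (hsub : 1 - q ≠ 0) (n : ℕ) : qInt q (n + 1) - q * qInt q n = 1 := by
  unfold qInt
  field_simp
  ring

theorem half_qInt_sq_add_eq_qTriangular (h2 : (2 : F) ≠ 0) (hq : q ^ 2 ≠ 1) (n : ℕ) :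
    1 / 2 * (qInt q n ^ 2 + (1 - q ^ (2 * n)) / (1 - q ^ 2)) = qTriangular q n := by
  have hsub := one_sub_ne_zero_of_sq_ne_one hq
  have hadd := one_add_ne_zero_of_sq_ne_one hq
  rw [qTriangular, one_sub_sq_eq_mul, qInt]
  field_simp
  ring

theorem qTriangular_succ (hq : q ^ 2 ≠ 1) (n : ℕ) :
    qTriangular q (n + 1) = qTriangular q n + q ^ n * qInt q (n + 1) := by
  have hsub := one_sub_ne_zero_of_sq_ne_one hq
  have hadd := one_add_ne_zero_of_sq_ne_one hq
  rw [qTriangular, qTriangular, one_sub_sq_eq_mul, qInt]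
  field_simp
  ring

theorem stratificationSum_coeff_J_eq_zero (h2 : (2 : F) ≠ 0) (hq : q ^ 2 ≠ 1) (g n : ℕ) :
    -(qInt q g * (qInt q (2 * (n + 1)) - qInt q (n + 1))) +
        qInt q (g + 1) * (qInt q (n + 1) - qInt q n) * qInt q (n + 1) -
        1 / 2 * (qInt q (n + 1) ^ 2 + (1 - q ^ (2 * (n + 1))) / (1 - q ^ 2)) +
        qTriangular q n = 0 := by
  have hsub := one_sub_ne_zero_of_sq_ne_one hq
  rw [half_qInt_sq_add_eq_qTriangular h2 hq, qTriangular_succ hq, qInt_two_mul_sub,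
    qInt_succ_sub hsub]
  linear_combination q ^ n * qInt q (n + 1) * qInt_succ_sub_mul hsub g

theorem stratificationSum_coeff_J_sq (h2 : (2 : F) ≠ 0) (hq : q ^ 2 ≠ 1) (g N : ℕ) :
    qInt q g * (qInt q (2 * N) - qInt q N) + 1 / 2 * qInt q N ^ 2 -
        (1 + 2 * q ^ (g + 2) - q ^ 2) / (2 * (1 - q) * (1 - q ^ 2)) * qInt q (2 * N) =
      -((1 - q ^ N) * (q ^ (g + 2) + q ^ (N + g)) / ((1 - q) ^ 2 * (1 - q ^ 2))) := by
  have hsub := one_sub_ne_zero_of_sq_ne_one hq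
  have hadd := one_add_ne_zero_of_sq_ne_one hq
  rw [qInt_two_mul_sub, qInt_two_mul, one_sub_sq_eq_mul, qInt, qInt]
  field_simp
  ring

theorem stratificationSum_coeff_K_eq_zero (hq : q ^ 2 ≠ 1) (N : ℕ) :
    1 / 2 * ((1 - q ^ (2 * N)) / (1 - q ^ 2)) -
      (1 - q) ^ 2 / (2 * (1 - q) * (1 - q ^ 2)) * qInt q (2 * N) = 0 := by
  have hsub := one_sub_ne_zero_of_sq_ne_one hq
  rw [qInt]
  field_simp
  ring

theorem stratificationSum_coeff_J_mul_S (h2 : (2 : F) ≠ 0) (q : F) (N : ℕ) :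
    2 / (2 * (1 - q) * (1 - q ^ 2)) * qInt q (2 * N) =
      (1 - q ^ N) * (1 + q ^ N) / ((1 - q) ^ 2 * (1 - q ^ 2)) := by
  rw [qInt_two_mul, qInt]
  field_simp

theorem stratificationSum_succ_succ (h2 : (2 : F) ≠ 0) (hq : q ^ 2 ≠ 1) (J S K : F) (g n : ℕ) :
    stratificationSum q J S K (g + 1) (n + 1) =
      J * (1 - q ^ (n + 1)) / ((1 - q) ^ 2 * (1 - q ^ 2)) *
        (S * (1 + q ^ (n + 1)) - J * (q ^ (g + 2) + q ^ (n + 1 + g))) := by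
  have coeff_J := stratificationSum_coeff_J_eq_zero h2 hq g n
  rw [qTriangular] at coeff_J
  simp only [stratificationSum, hodgeEven, Nat.add_sub_cancel]
  linear_combination J * S * stratificationSum_coeff_J_mul_S h2 q (n + 1) +
    J ^ 2 * stratificationSum_coeff_J_sq h2 hq g (n + 1) + J * coeff_J +
    K * stratificationSum_coeff_K_eq_zero hq (n + 1)

theorem theoremB_algebraic_core_general (h2 : (2 : F) ≠ 0) (hq : q ^ 2 ≠ 1) (J S K : F)
    {g N : ℕ} (hg : 1 ≤ g) (hN : 1 ≤ N) :
    hodgeOdd q J S g * stratificationSum q J S K g N =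
      J ^ 2 * (1 - q ^ N) * (q ^ g * J - S) / ((1 - q) ^ 3 * (1 - q ^ 2) ^ 2) *
        (J * (q ^ (g + 1) + q ^ (N + g - 1)) - S * (1 + q ^ N)) := by
  obtain ⟨g, rfl⟩ := Nat.exists_eq_add_of_le' hg
  obtain ⟨n, rfl⟩ := Nat.exists_eq_add_of_le' hN
  rw [stratificationSum_succ_succ h2 hq, hodgeOdd, ← add_assoc, Nat.add_sub_cancel]
  field_simp
  ring

end General

theorem qq_pow_ne_one {n : ℕ} (hn : n ≠ 0) : qq ^ n ≠ 1 := by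
  intro h
  have hpoly : (MvPolynomial.X 0 * MvPolynomial.X 1 : MvPolynomial (Fin 2) ℚ) ^ n = 1 :=
    IsFractionRing.injective _ Kf (by simpa only [qq, uu, vv, map_pow, map_mul, map_one] using h)
  simpa [hn] using congrArg (MvPolynomial.eval 0) hpoly

/-- **Algebraic core of Theorem B.**  The stratification of the small-parameter moduli space
`N_{σ_m^+}(2,2,d₁,d₂)` (`d₁` odd, `d₂` even, `N = d₁-d₂-2g+2`) computed in the proof of
Theorem 7.1 sums to the closed formula of Theorem B. -/
theorem theoremB_algebraic_core (g N : ℕ) (hg : 2 ≤ g) (hN : 2 ≤ N) :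
    Modd g *
        (Mev g * ee (2 * N) +
          Jg g * (Jg g - 1) * ee (g - 1) * (ee (2 * N) - ee N) +
          Jg g * ee g * (ee N - ee (N - 1)) * ee N +
          (1 / 2 : Kf) * (Jg g ^ 2 * ee N ^ 2 + Kg g * (1 - qq ^ (2 * N)) / (1 - qq ^ 2)) -
          (1 / 2 : Kf) * Jg g * (ee N ^ 2 + (1 - qq ^ (2 * N)) / (1 - qq ^ 2)) +
          Jg g * (1 - qq ^ (N - 1)) * (1 - qq ^ N) / ((1 - qq ^ 2) * (1 - qq))) =
      Jg g ^ 2 * (1 - qq ^ N) * (qq ^ g * Jg g - Sg g) / ((1 - qq) ^ 3 * (1 - qq ^ 2) ^ 2) *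
        (Jg g * (qq ^ (g + 1) + qq ^ (N + g - 1)) - Sg g * (1 + qq ^ N)) :=
  theoremB_algebraic_core_general two_ne_zero (qq_pow_ne_one two_ne_zero) (Jg g) (Sg g) (Kg g)
    (one_le_two.trans hg) (one_le_two.trans hN)

end
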